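/- There exists a constant C > 0, independent of h, the center of K, u and w, such that for every h > 0, every cube K of half side h, every function u of class C⁴ on a neighborhood of K, and every w in the shape space P(K) = P₂(K) + span{x₁³, x₂³, x₃³, x₁x₂x₃}, one has |∫_K ∇(Δu) · ∇(w − I_K w) dx₁dx₂dx₃| ≤ C h² |u|_{H⁴(K)} |w|_{H²(K)}. -/

import Mathlib

open MeasureTheory

/-- Partial derivative in the first variable of a curried function on `ℝ³`. -/
noncomputable def qd1 (f : ℝ → ℝ → ℝ → ℝ) : ℝ → ℝ → ℝ → ℝ :=
  fun x y z => deriv (fun t => f t y z) x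

/-- Partial derivative in the second variable of a curried function on `ℝ³`. -/
noncomputable def qd2 (f : ℝ → ℝ → ℝ → ℝ) : ℝ → ℝ → ℝ → ℝ :=
  fun x y z => deriv (fun t => f x t z) y

/-- Partial derivative in the third variable of a curried function on `ℝ³`. -/
noncomputable def qd3 (f : ℝ → ℝ → ℝ → ℝ) : ℝ → ℝ → ℝ → ℝ :=
  fun x y z => deriv (fun t => f x y t) z

/-- Membership in the shape space `P(K) = P₂(K) + span{x₁³, x₂³, x₃³, x₁x₂x₃}` of the
three-dimensional cubic Morley element. -/
def MorleyShape3 (w : ℝ → ℝ → ℝ → ℝ) : Prop :=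
  ∃ c0 c1 c2 c3 c4 c5 c6 c7 c8 c9 c10 c11 c12 c13 : ℝ, ∀ x y z : ℝ,
    w x y z = c0 + c1 * x + c2 * y + c3 * z + c4 * x ^ 2 + c5 * y ^ 2 + c6 * z ^ 2
      + c7 * (x * y) + c8 * (x * z) + c9 * (y * z)
      + c10 * x ^ 3 + c11 * y ^ 3 + c12 * z ^ 3 + c13 * (x * y * z)

/-- The trilinear (Q₁) interpolation operator on the cube with center `(c1, c2, c3)` and
half side `h`: the unique element of
`span{1, x₁, x₂, x₃, x₁x₂, x₁x₃, x₂x₃, x₁x₂x₃}` agreeing with `w` at the eight vertices. -/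
noncomputable def IK3 (w : ℝ → ℝ → ℝ → ℝ) (c1 c2 c3 h : ℝ) : ℝ → ℝ → ℝ → ℝ :=
  fun x y z =>
    (w (c1 + h) (c2 + h) (c3 + h)
        * ((1 + (x - c1) / h) * (1 + (y - c2) / h) * (1 + (z - c3) / h))
      + w (c1 + h) (c2 + h) (c3 - h)
        * ((1 + (x - c1) / h) * (1 + (y - c2) / h) * (1 - (z - c3) / h))
      + w (c1 + h) (c2 - h) (c3 + h)
        * ((1 + (x - c1) / h) * (1 - (y - c2) / h) * (1 + (z - c3) / h))
      + w (c1 + h) (c2 - h) (c3 - h)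
        * ((1 + (x - c1) / h) * (1 - (y - c2) / h) * (1 - (z - c3) / h))
      + w (c1 - h) (c2 + h) (c3 + h)
        * ((1 - (x - c1) / h) * (1 + (y - c2) / h) * (1 + (z - c3) / h))
      + w (c1 - h) (c2 + h) (c3 - h)
        * ((1 - (x - c1) / h) * (1 + (y - c2) / h) * (1 - (z - c3) / h))
      + w (c1 - h) (c2 - h) (c3 + h)
        * ((1 - (x - c1) / h) * (1 - (y - c2) / h) * (1 + (z - c3) / h))
      + w (c1 - h) (c2 - h) (c3 - h)
        * ((1 - (x - c1) / h) * (1 - (y - c2) / h) * (1 - (z - c3) / h))) / 8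

/-- The `H²` seminorm of `v` on the box `[a1,b1] × [a2,b2] × [a3,b3]`, each ordering of
mixed partial derivatives counted. -/
noncomputable def semiH2Box (v : ℝ → ℝ → ℝ → ℝ) (a1 b1 a2 b2 a3 b3 : ℝ) : ℝ :=
  Real.sqrt (∫ x in a1..b1, ∫ y in a2..b2, ∫ z in a3..b3,
    (qd1 (qd1 v) x y z) ^ 2 + (qd2 (qd2 v) x y z) ^ 2 + (qd3 (qd3 v) x y z) ^ 2
      + 2 * (qd1 (qd2 v) x y z) ^ 2 + 2 * (qd1 (qd3 v) x y z) ^ 2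
      + 2 * (qd2 (qd3 v) x y z) ^ 2)

/-- The `H⁴` seminorm of `u` on the box `[a1,b1] × [a2,b2] × [a3,b3]`, each ordering of
mixed partial derivatives counted (hence the multinomial coefficients). -/
noncomputable def semiH4Box (u : ℝ → ℝ → ℝ → ℝ) (a1 b1 a2 b2 a3 b3 : ℝ) : ℝ :=
  Real.sqrt (∫ x in a1..b1, ∫ y in a2..b2, ∫ z in a3..b3,
    (qd1 (qd1 (qd1 (qd1 u))) x y z) ^ 2 + (qd2 (qd2 (qd2 (qd2 u))) x y z) ^ 2
      + (qd3 (qd3 (qd3 (qd3 u))) x y z) ^ 2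
      + 4 * (qd1 (qd1 (qd1 (qd2 u))) x y z) ^ 2
      + 4 * (qd1 (qd1 (qd1 (qd3 u))) x y z) ^ 2
      + 4 * (qd1 (qd2 (qd2 (qd2 u))) x y z) ^ 2
      + 4 * (qd2 (qd2 (qd2 (qd3 u))) x y z) ^ 2
      + 4 * (qd1 (qd3 (qd3 (qd3 u))) x y z) ^ 2
      + 4 * (qd2 (qd3 (qd3 (qd3 u))) x y z) ^ 2
      + 6 * (qd1 (qd1 (qd2 (qd2 u))) x y z) ^ 2
      + 6 * (qd1 (qd1 (qd3 (qd3 u))) x y z) ^ 2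
      + 6 * (qd2 (qd2 (qd3 (qd3 u))) x y z) ^ 2
      + 12 * (qd1 (qd1 (qd2 (qd3 u))) x y z) ^ 2
      + 12 * (qd1 (qd2 (qd2 (qd3 u))) x y z) ^ 2
      + 12 * (qd1 (qd2 (qd3 (qd3 u))) x y z) ^ 2)

/-- `u` is of class `C⁴` on a neighborhood of the box `[a1,b1] × [a2,b2] × [a3,b3]`. -/
def C4Near3 (u : ℝ → ℝ → ℝ → ℝ) (a1 b1 a2 b2 a3 b3 : ℝ) : Prop :=
  ∃ U : Set (ℝ × ℝ × ℝ), IsOpen U ∧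
    Set.Icc a1 b1 ×ˢ (Set.Icc a2 b2 ×ˢ Set.Icc a3 b3) ⊆ U ∧
    ContDiffOn ℝ 4 (fun p : ℝ × ℝ × ℝ => u p.1 p.2.1 p.2.2) U

/-! On a cube `K` the interpolation error `e = w - I_K w` of a function `w` in the shape space is a
sum `e₁(x₁) + e₂(x₂) + e₃(x₃)` of one-variable cubics `eᵢ` vanishing on the two faces of `K`
orthogonal to the `i`-th axis. Hence `∂ᵢ e = ∂ᵢ eᵢ`, and integrating by parts in the `i`-th variable
alone gives `∫ ∂ᵢ Δu ∂ᵢ e = -∫ ∂ᵢ² Δu eᵢ` without boundary terms. The Poincaré inequality `‖eᵢ‖ ≤ 2h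
‖∂ᵢ eᵢ‖` and a second integration by parts, `‖∂ᵢ eᵢ‖² = -∫ eᵢ ∂ᵢ² eᵢ`, give `‖eᵢ‖ ≤ (2h)² ‖∂ᵢ² eᵢ‖`.
Finally `∂ᵢ² eᵢ = ∂ᵢ² e = ∂ᵢ² w`, since `I_K w` is affine in each variable. -/

open Set Filter Topology

/-- The `i`-th partial derivative. It is a line derivative rather than a value of `fderiv`, so that
it agrees with the one-variable derivatives `qd1`, `qd2`, `qd3` for every function `f`. -/
noncomputable def partialDeriv {d : ℕ} (i : Fin d) (f : (Fin d → ℝ) → ℝ) : (Fin d → ℝ) → ℝ :=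
  fun x ↦ lineDeriv ℝ f x (Pi.single i 1)

local notation "∂[" i "]" => partialDeriv i

section PartialDerivatives

variable {d : ℕ} {f g : (Fin d → ℝ) → ℝ} {x : Fin d → ℝ} {m n : WithTop ℕ∞}

lemma partialDeriv_eq_fderiv (i : Fin d) (hf : DifferentiableAt ℝ f x) :
    ∂[i] f x = fderiv ℝ f x (Pi.single i 1) :=
  hf.lineDeriv_eq_fderiv

lemma partialDeriv_eventuallyEq_fderiv (i : Fin d) (hf : ContDiffAt ℝ 1 f x) :
    ∂[i] f =ᶠ[𝓝 x] fun y ↦ fderiv ℝ f y (Pi.single i 1) := by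
  filter_upwards [hf.eventually (by simp)] with y hy
  exact partialDeriv_eq_fderiv i (hy.differentiableAt one_ne_zero)

lemma contDiffAt_partialDeriv (i : Fin d) (hf : ContDiffAt ℝ n f x) (hmn : m + 1 ≤ n) :
    ContDiffAt ℝ m (∂[i] f) x :=
  ((hf.fderiv_right hmn).clm_apply contDiffAt_const).congr_of_eventuallyEq
    (partialDeriv_eventuallyEq_fderiv i (hf.of_le (le_trans (by simp) hmn)))

lemma partialDeriv_congr_nhds (i : Fin d) (h : f =ᶠ[𝓝 x] g) : ∂[i] f =ᶠ[𝓝 x] ∂[i] g := by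
  filter_upwards [eventually_eventuallyEq_nhds.2 h] with y hy
  exact hy.lineDeriv_eq

lemma partialDeriv_comm (i j : Fin d) (hf : ContDiffAt ℝ 2 f x) :
    ∂[i] (∂[j] f) x = ∂[j] (∂[i] f) x := by
  have second_fderiv (k l : Fin d) :
      ∂[k] (∂[l] f) x = fderiv ℝ (fderiv ℝ f) x (Pi.single k 1) (Pi.single l 1) := by
    have hdiff : DifferentiableAt ℝ (fderiv ℝ f) x :=
      (hf.fderiv_right (m := 1) (by norm_num)).differentiableAt one_ne_zero
    rw [(partialDeriv_congr_nhds k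
        (partialDeriv_eventuallyEq_fderiv l (hf.of_le (by norm_num)))).eq_of_nhds,
      partialDeriv_eq_fderiv k (hdiff.clm_apply (differentiableAt_const _)),
      fderiv_clm_apply hdiff (differentiableAt_const _)]
    simp
  rw [second_fderiv, second_fderiv]
  exact hf.isSymmSndFDerivAt (by simp) _ _

lemma partialDeriv_comm_eventuallyEq (i j : Fin d) (hf : ContDiffAt ℝ 2 f x) :
    ∂[i] (∂[j] f) =ᶠ[𝓝 x] ∂[j] (∂[i] f) := by
  filter_upwards [hf.eventually (by simp)] with y hy using partialDeriv_comm i j hy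

lemma partialDeriv_sq_comm (i j : Fin d) (hf : ContDiffAt ℝ 4 f x) :
    ∂[i] (∂[i] (∂[j] (∂[j] f))) x = ∂[j] (∂[j] (∂[i] (∂[i] f))) x := by
  have smooth (k : Fin d) : ContDiffAt ℝ 3 (∂[k] f) x := contDiffAt_partialDeriv k hf (by norm_num)
  have smooth₂ (k l : Fin d) : ContDiffAt ℝ 2 (∂[k] (∂[l] f)) x :=
    contDiffAt_partialDeriv k (smooth l) (by norm_num)
  calc ∂[i] (∂[i] (∂[j] (∂[j] f))) x
      = ∂[i] (∂[j] (∂[i] (∂[j] f))) x :=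
        (partialDeriv_congr_nhds i
          (partialDeriv_comm_eventuallyEq i j ((smooth j).of_le (by norm_num)))).eq_of_nhds
    _ = ∂[j] (∂[i] (∂[i] (∂[j] f))) x := partialDeriv_comm i j (smooth₂ i j)
    _ = ∂[j] (∂[i] (∂[j] (∂[i] f))) x :=
        (partialDeriv_congr_nhds j (partialDeriv_congr_nhds i
          (partialDeriv_comm_eventuallyEq i j (hf.of_le (by norm_num))))).eq_of_nhds
    _ = ∂[j] (∂[j] (∂[i] (∂[i] f))) x :=
        (partialDeriv_congr_nhds j
          (partialDeriv_comm_eventuallyEq i j ((smooth i).of_le (by norm_num)))).eq_of_nhds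

lemma partialDeriv_mul (i : Fin d) (hf : DifferentiableAt ℝ f x) (hg : DifferentiableAt ℝ g x) :
    ∂[i] (fun y ↦ f y * g y) x = f x * ∂[i] g x + ∂[i] f x * g x := by
  rw [partialDeriv_eq_fderiv i (hf.fun_mul hg), partialDeriv_eq_fderiv i hf,
    partialDeriv_eq_fderiv i hg, fderiv_fun_mul hf hg]
  simp [mul_comm]

lemma partialDeriv_sum {κ : Type*} {s : Finset κ} {F : κ → (Fin d → ℝ) → ℝ} (i : Fin d)
    (hF : ∀ j ∈ s, DifferentiableAt ℝ (F j) x) :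
    ∂[i] (fun y ↦ ∑ j ∈ s, F j y) x = ∑ j ∈ s, ∂[i] (F j) x := by
  rw [partialDeriv_eq_fderiv i (DifferentiableAt.fun_sum hF), fderiv_fun_sum hF,
    sum_apply]
  exact Finset.sum_congr rfl fun j hj ↦ (partialDeriv_eq_fderiv i (hF j hj)).symm

lemma partialDeriv_eq_deriv_update (i : Fin d) (f : (Fin d → ℝ) → ℝ) (x : Fin d → ℝ) :
    ∂[i] f x = deriv (fun t ↦ f (Function.update x i t)) (x i) := by
  have line_eq (t : ℝ) : x + t • Pi.single i 1 = Function.update x i (x i + t) := by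
    ext j
    obtain rfl | hj := eq_or_ne j i <;> simp [*]
  simp only [partialDeriv, lineDeriv, line_eq]
  simpa using deriv_comp_const_add (fun t ↦ f (Function.update x i t)) (x i) 0

lemma partialDeriv_sum_comp_apply (i : Fin d) (q : Fin d → ℝ → ℝ) :
    ∂[i] (fun x ↦ ∑ j, q j (x j)) = ∂[i] (fun x ↦ q i (x i)) := by
  ext x
  have update_sum (t : ℝ) : ∑ j, q j (Function.update x i t j) =
      q i t + ∑ j ∈ Finset.univ.erase i, q j (x j) := by
    rw [← Finset.add_sum_erase _ _ (Finset.mem_univ i), Function.update_self]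
    congr 1
    refine Finset.sum_congr rfl fun j hj ↦ ?_
    rw [Function.update_of_ne (Finset.ne_of_mem_erase hj)]
  simp only [partialDeriv_eq_deriv_update, update_sum, deriv_add_const, Function.update_self]

lemma partialDeriv_sub (i : Fin d) (hf : DifferentiableAt ℝ f x) (hg : DifferentiableAt ℝ g x) :
    ∂[i] (fun y ↦ f y - g y) x = ∂[i] f x - ∂[i] g x := by
  rw [partialDeriv_eq_fderiv i (hf.fun_sub hg), partialDeriv_eq_fderiv i hf,
    partialDeriv_eq_fderiv i hg, fderiv_fun_sub hf hg, sub_apply]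

/-- `g` is affine in its `i`-th variable when the others are frozen. -/
def IsAffineInCoord (i : Fin d) (g : (Fin d → ℝ) → ℝ) : Prop :=
  ∀ x t, g (Function.update x i t) =
    g (Function.update x i 0) + t * (g (Function.update x i 1) - g (Function.update x i 0))

lemma partialDeriv_update_of_isAffineInCoord {i : Fin d} (hg : IsAffineInCoord i g)
    (x : Fin d → ℝ) (t : ℝ) : ∂[i] g (Function.update x i t) = ∂[i] g x := by
  have slope (y : Fin d → ℝ) :
      ∂[i] g y = g (Function.update y i 1) - g (Function.update y i 0) := by
    rw [partialDeriv_eq_deriv_update, funext (hg y)]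
    simp
  simp [slope]

lemma partialDeriv_partialDeriv_sub_of_isAffineInCoord {i : Fin d} (hf : Differentiable ℝ f)
    (hg : Differentiable ℝ g) (hg_affine : IsAffineInCoord i g) :
    ∂[i] (∂[i] (fun x ↦ f x - g x)) = ∂[i] (∂[i] f) := by
  ext x
  have first_deriv : ∂[i] (fun x ↦ f x - g x) = fun x ↦ ∂[i] f x - ∂[i] g x :=
    funext fun x ↦ partialDeriv_sub i (hf x) (hg x)
  rw [first_deriv, partialDeriv_eq_deriv_update, partialDeriv_eq_deriv_update]
  simp only [partialDeriv_update_of_isAffineInCoord hg_affine, deriv_sub_const]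

lemma partialDeriv_partialDeriv_sum {κ : Type*} {s : Finset κ} {F : κ → (Fin d → ℝ) → ℝ}
    (i : Fin d) (hF : ∀ j ∈ s, ContDiffAt ℝ 2 (F j) x) :
    ∂[i] (∂[i] (fun y ↦ ∑ j ∈ s, F j y)) x = ∑ j ∈ s, ∂[i] (∂[i] (F j)) x := by
  have smooth_near : ∀ᶠ y in 𝓝 x, ∀ j ∈ s, ContDiffAt ℝ 2 (F j) y :=
    (Finset.eventually_all s).2 fun j hj ↦ (hF j hj).eventually (by simp)
  have first_deriv : ∂[i] (fun y ↦ ∑ j ∈ s, F j y) =ᶠ[𝓝 x] fun y ↦ ∑ j ∈ s, ∂[i] (F j) y := by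
    filter_upwards [smooth_near] with y hy
    exact partialDeriv_sum i fun j hj ↦ (hy j hj).differentiableAt two_ne_zero
  rw [(partialDeriv_congr_nhds i first_deriv).eq_of_nhds]
  exact partialDeriv_sum i fun j hj ↦
    (contDiffAt_partialDeriv (m := 1) i (hF j hj) (by norm_num)).differentiableAt one_ne_zero

end PartialDerivatives

section LebesgueNorm

variable {α : Type*} [MeasurableSpace α] {μ : Measure α} {f g : α → ℝ}

lemma lpNorm_two_eq_sqrt_integral_sq (hf : AEStronglyMeasurable f μ) :
    lpNorm f 2 μ = √(∫ x, f x ^ 2 ∂μ) := by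
  simp [lpNorm_eq_integral_norm_rpow_toReal two_ne_zero ENNReal.ofNat_ne_top hf,
    Real.sqrt_eq_rpow]

lemma integral_mul_self_eq_lpNorm_two_sq (hf : AEStronglyMeasurable f μ) :
    ∫ x, f x * f x ∂μ = lpNorm f 2 μ ^ 2 := by
  simp only [← sq]
  rw [lpNorm_two_eq_sqrt_integral_sq hf, Real.sq_sqrt (by positivity)]

lemma integral_abs_mul_le_lpNorm_two_mul_lpNorm_two (hf : MemLp f 2 μ) (hg : MemLp g 2 μ) :
    ∫ x, |f x * g x| ∂μ ≤ lpNorm f 2 μ * lpNorm g 2 μ := by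
  have two_eq : (2 : ENNReal) = ENNReal.ofReal 2 := by simp
  have holder := integral_mul_norm_le_Lp_mul_Lq Real.HolderConjugate.two_two
    (two_eq ▸ hf : MemLp f (ENNReal.ofReal 2) μ) (two_eq ▸ hg : MemLp g (ENNReal.ofReal 2) μ)
  rw [lpNorm_two_eq_sqrt_integral_sq hf.1, lpNorm_two_eq_sqrt_integral_sq hg.1,
    Real.sqrt_eq_rpow, Real.sqrt_eq_rpow]
  simpa [abs_mul] using holder

lemma abs_integral_mul_le_lpNorm_two_mul_lpNorm_two (hf : MemLp f 2 μ) (hg : MemLp g 2 μ) :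
    |∫ x, f x * g x ∂μ| ≤ lpNorm f 2 μ * lpNorm g 2 μ :=
  abs_integral_le_integral_abs.trans (integral_abs_mul_le_lpNorm_two_mul_lpNorm_two hf hg)

lemma memLp_restrict_of_continuousOn [TopologicalSpace α] [T2Space α] [OpensMeasurableSpace α]
    [SecondCountableTopology α] [IsFiniteMeasureOnCompacts μ] {K : Set α} (hK : IsCompact K)
    (hf : ContinuousOn f K) (p : ENNReal) : MemLp f p (μ.restrict K) := by
  have : IsFiniteMeasure (μ.restrict K) := isFiniteMeasure_restrict.2 hK.measure_lt_top.ne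
  obtain ⟨C, hC⟩ := hK.exists_bound_of_continuousOn hf
  exact .of_bound (hf.aestronglyMeasurable hK.measurableSet) C
    (ae_restrict_of_forall_mem hK.measurableSet hC)

lemma lpNorm_congr_ae {E : Type*} [NormedAddCommGroup E] {F G : α → E} {p : ENNReal}
    (h : F =ᵐ[μ] G) : lpNorm F p μ = lpNorm G p μ := by
  classical
  exact if_congr (aestronglyMeasurable_congr h) (congrArg ENNReal.toReal (eLpNorm_congr_ae h)) rfl

end LebesgueNorm

section BoxIntegrals

variable {d : ℕ} {i : Fin d} {a b : Fin d → ℝ} {f g : (Fin d → ℝ) → ℝ}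

/-- `f` vanishes on the two faces of the box `Icc a b` that are orthogonal to the `i`-th axis: the
boundary condition under which integration by parts in the `i`-th variable has no boundary terms. -/
def VanishesOnFaces (i : Fin d) (a b : Fin d → ℝ) (f : (Fin d → ℝ) → ℝ) : Prop :=
  ∀ x ∈ Icc a b, x i = a i ∨ x i = b i → f x = 0

lemma continuousOn_of_forall_contDiffAt {E : Type*} [NormedAddCommGroup E] [NormedSpace ℝ E]
    {F : E → ℝ} {K : Set E} {n : WithTop ℕ∞} (hF : ∀ x ∈ K, ContDiffAt ℝ n F x) :
    ContinuousOn F K :=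
  fun x hx ↦ (hF x hx).continuousAt.continuousWithinAt

lemma continuousOn_partialDeriv {K : Set (Fin d → ℝ)} (hf : ∀ x ∈ K, ContDiffAt ℝ 1 f x) :
    ContinuousOn (∂[i] f) K :=
  continuousOn_of_forall_contDiffAt (n := 0)
    fun x hx ↦ contDiffAt_partialDeriv i (hf x hx) (by norm_num)

lemma integral_partialDeriv_eq_zero (hab : a ≤ b) (hf : ∀ x ∈ Icc a b, ContDiffAt ℝ 1 f x)
    (hf₀ : VanishesOnFaces i a b f) : ∫ x in Icc a b, ∂[i] f x = 0 := by
  obtain _ | d := d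
  · exact i.elim0
  have sum_deriv : EqOn (∂[i] f)
      (fun x ↦ ∑ j, (if j = i then fderiv ℝ f x else 0) (Pi.single j 1)) (Icc a b) := by
    intro x hx
    rw [partialDeriv_eq_fderiv i ((hf x hx).differentiableAt one_ne_zero)]
    simp [ite_apply, apply_ite]
  have integrable : IntegrableOn
      (fun x ↦ ∑ j, (if j = i then fderiv ℝ f x else 0) (Pi.single j 1)) (Icc a b) :=
    ((continuousOn_partialDeriv hf).integrableOn_compact isCompact_Icc).congr_fun
      sum_deriv measurableSet_Icc
  rw [setIntegral_congr_fun measurableSet_Icc sum_deriv,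
    integral_divergence_of_hasFDerivAt_off_countable' a b hab (fun j x ↦ if j = i then f x else 0)
      (fun j x ↦ if j = i then fderiv ℝ f x else 0) ∅ countable_empty ?_ ?_ integrable]
  · have insertNth_mem {t : ℝ} (ht : t ∈ Icc (a i) (b i)) {y : Fin d → ℝ}
        (hy : y ∈ Icc (a ∘ i.succAbove) (b ∘ i.succAbove)) : i.insertNth t y ∈ Icc a b :=
      Fin.insertNth_mem_Icc.2 ⟨ht, hy⟩
    refine Finset.sum_eq_zero fun j _ ↦ ?_
    obtain rfl | hj := eq_or_ne j i
    · rw [setIntegral_eq_zero_of_forall_eq_zero, setIntegral_eq_zero_of_forall_eq_zero, sub_zero]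
      · intro y hy
        simp [hf₀ _ (insertNth_mem (left_mem_Icc.2 (hab j)) hy)]
      · intro y hy
        simp [hf₀ _ (insertNth_mem (right_mem_Icc.2 (hab j)) hy)]
    · simp [hj]
  · intro j
    by_cases hj : j = i <;> simp [hj, continuousOn_of_forall_contDiffAt hf, continuousOn_const]
  · rintro x ⟨hx, -⟩ j
    have hx' : x ∈ Icc a b := ⟨fun k ↦ (hx k trivial).1.le, fun k ↦ (hx k trivial).2.le⟩
    by_cases hj : j = i
    · simpa [hj] using ((hf x hx').differentiableAt one_ne_zero).hasFDerivAt
    · simpa [hj] using hasFDerivAt_const (0 : ℝ) x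

lemma integral_mul_partialDeriv_eq_neg (hab : a ≤ b) (hf : ∀ x ∈ Icc a b, ContDiffAt ℝ 1 f x)
    (hg : ∀ x ∈ Icc a b, ContDiffAt ℝ 1 g x) (hf₀ : VanishesOnFaces i a b f) :
    ∫ x in Icc a b, f x * ∂[i] g x = -∫ x in Icc a b, ∂[i] f x * g x := by
  have hfc := continuousOn_of_forall_contDiffAt hf
  have hgc := continuousOn_of_forall_contDiffAt hg
  have product_rule : ∀ x ∈ Icc a b,
      ∂[i] (fun y ↦ f y * g y) x = f x * ∂[i] g x + ∂[i] f x * g x := fun x hx ↦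
    partialDeriv_mul i ((hf x hx).differentiableAt one_ne_zero)
      ((hg x hx).differentiableAt one_ne_zero)
  rw [eq_neg_iff_add_eq_zero, ← integral_add
      ((hfc.fun_mul (continuousOn_partialDeriv hg)).integrableOn_compact isCompact_Icc)
      (((continuousOn_partialDeriv hf).fun_mul hgc).integrableOn_compact isCompact_Icc),
    ← setIntegral_congr_fun measurableSet_Icc product_rule]
  exact integral_partialDeriv_eq_zero hab (fun x hx ↦ (hf x hx).mul (hg x hx))
    fun x hx hface ↦ by rw [hf₀ x hx hface, zero_mul]

lemma integral_mul_self_eq_neg_two_mul_integral (hab : a ≤ b)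
    (hf : ∀ x ∈ Icc a b, ContDiffAt ℝ 1 f x) (hf₀ : VanishesOnFaces i a b f) (m : ℝ) :
    ∫ x in Icc a b, f x * f x = -2 * ∫ x in Icc a b, (x i - m) * f x * ∂[i] f x := by
  have hfc := continuousOn_of_forall_contDiffAt hf
  have coord_smooth (x : Fin d → ℝ) : ContDiffAt ℝ 1 (fun y : Fin d → ℝ ↦ y i - m) x := by
    fun_prop
  have weighted_smooth : ∀ x ∈ Icc a b, ContDiffAt ℝ 1 (fun y ↦ (y i - m) * f y) x :=
    fun x hx ↦ (coord_smooth x).mul (hf x hx)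
  have product_rule : ∀ x ∈ Icc a b, ∂[i] (fun y ↦ (y i - m) * f y) x * f x =
      (x i - m) * f x * ∂[i] f x + f x * f x := fun x hx ↦ by
    rw [partialDeriv_mul i ((coord_smooth x).differentiableAt one_ne_zero)
      ((hf x hx).differentiableAt one_ne_zero)]
    simp only [partialDeriv_eq_deriv_update, Function.update_self, deriv_sub_const, deriv_id'']
    ring
  have by_parts := integral_mul_partialDeriv_eq_neg hab weighted_smooth hf
    fun x hx hface ↦ by rw [hf₀ x hx hface, mul_zero]
  rw [setIntegral_congr_fun measurableSet_Icc product_rule, integral_add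
    (((continuousOn_of_forall_contDiffAt weighted_smooth).fun_mul
      (continuousOn_partialDeriv hf)).integrableOn_compact isCompact_Icc)
    ((hfc.fun_mul hfc).integrableOn_compact isCompact_Icc)] at by_parts
  linarith

lemma le_of_mul_self_le_mul {s t : ℝ} (ht : 0 ≤ t) (h : s * s ≤ s * t) : s ≤ t := by
  by_contra! hlt
  exact h.not_gt (mul_lt_mul_of_pos_left hlt (ht.trans_lt hlt))

-- Integrating against the weight `xᵢ - m` with `m` the midpoint of the side makes the constant `1`.
lemma lpNorm_le_mul_lpNorm_partialDeriv (hab : a ≤ b) (hf : ∀ x ∈ Icc a b, ContDiffAt ℝ 1 f x)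
    (hf₀ : VanishesOnFaces i a b f) :
    lpNorm f 2 (volume.restrict (Icc a b)) ≤
      (b i - a i) * lpNorm (∂[i] f) 2 (volume.restrict (Icc a b)) := by
  set ν := volume.restrict (Icc a b)
  have hfc := continuousOn_of_forall_contDiffAt hf
  have hdfc := continuousOn_partialDeriv (i := i) hf
  have memLp_f : MemLp f 2 ν := memLp_restrict_of_continuousOn isCompact_Icc hfc 2
  have memLp_df : MemLp (∂[i] f) 2 ν := memLp_restrict_of_continuousOn isCompact_Icc hdfc 2
  have side_nonneg : 0 ≤ b i - a i := sub_nonneg.2 (hab i)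
  have weight_le : ∀ x ∈ Icc a b, ‖(x i - (a i + b i) / 2) * f x * ∂[i] f x‖ ≤
      (b i - a i) / 2 * |f x * ∂[i] f x| := fun x hx ↦ by
    rw [mul_assoc, norm_mul, Real.norm_eq_abs, Real.norm_eq_abs]
    gcongr
    rw [abs_le]
    constructor <;> linarith [hx.1 i, hx.2 i]
  have integrable_product : IntegrableOn (fun x ↦ |f x * ∂[i] f x|) (Icc a b) :=
    (hfc.fun_mul hdfc).abs.integrableOn_compact isCompact_Icc
  have sq_le : lpNorm f 2 ν * lpNorm f 2 ν ≤
      lpNorm f 2 ν * ((b i - a i) * lpNorm (∂[i] f) 2 ν) := by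
    calc lpNorm f 2 ν * lpNorm f 2 ν
        = -2 * ∫ x in Icc a b, (x i - (a i + b i) / 2) * f x * ∂[i] f x := by
          rw [← sq, ← integral_mul_self_eq_lpNorm_two_sq memLp_f.1,
            integral_mul_self_eq_neg_two_mul_integral hab hf hf₀]
      _ ≤ 2 * |∫ x in Icc a b, (x i - (a i + b i) / 2) * f x * ∂[i] f x| := by
          linarith [neg_abs_le (∫ x in Icc a b, (x i - (a i + b i) / 2) * f x * ∂[i] f x)]
      _ ≤ 2 * ∫ x in Icc a b, (b i - a i) / 2 * |f x * ∂[i] f x| := by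
          gcongr
          exact norm_integral_le_of_norm_le (integrable_product.const_mul _)
            (ae_restrict_of_forall_mem measurableSet_Icc weight_le)
      _ = (b i - a i) * ∫ x in Icc a b, |f x * ∂[i] f x| := by
          rw [integral_const_mul]; ring
      _ ≤ (b i - a i) * (lpNorm f 2 ν * lpNorm (∂[i] f) 2 ν) := by
          gcongr
          exact integral_abs_mul_le_lpNorm_two_mul_lpNorm_two memLp_f memLp_df
      _ = lpNorm f 2 ν * ((b i - a i) * lpNorm (∂[i] f) 2 ν) := by ring
  exact le_of_mul_self_le_mul (mul_nonneg side_nonneg lpNorm_nonneg) sq_le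

lemma lpNorm_le_sq_mul_lpNorm_partialDeriv_partialDeriv (hab : a ≤ b)
    (hf : ∀ x ∈ Icc a b, ContDiffAt ℝ 2 f x) (hf₀ : VanishesOnFaces i a b f) :
    lpNorm f 2 (volume.restrict (Icc a b)) ≤
      (b i - a i) ^ 2 * lpNorm (∂[i] (∂[i] f)) 2 (volume.restrict (Icc a b)) := by
  set ν := volume.restrict (Icc a b)
  have hf₁ : ∀ x ∈ Icc a b, ContDiffAt ℝ 1 f x := fun x hx ↦ (hf x hx).of_le (by norm_num)
  have hdf : ∀ x ∈ Icc a b, ContDiffAt ℝ 1 (∂[i] f) x :=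
    fun x hx ↦ contDiffAt_partialDeriv i (hf x hx) (by norm_num)
  have memLp_of_continuousOn {F : (Fin d → ℝ) → ℝ} (hF : ContinuousOn F (Icc a b)) :
      MemLp F 2 ν := memLp_restrict_of_continuousOn isCompact_Icc hF 2
  have memLp_f := memLp_of_continuousOn (continuousOn_of_forall_contDiffAt hf)
  have memLp_df := memLp_of_continuousOn (continuousOn_partialDeriv (i := i) hf₁)
  have memLp_ddf := memLp_of_continuousOn (continuousOn_partialDeriv (i := i) hdf)
  have side_nonneg : 0 ≤ b i - a i := sub_nonneg.2 (hab i)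
  have poincare := lpNorm_le_mul_lpNorm_partialDeriv hab hf₁ hf₀
  have interpolation : lpNorm (∂[i] f) 2 ν * lpNorm (∂[i] f) 2 ν ≤
      lpNorm f 2 ν * lpNorm (∂[i] (∂[i] f)) 2 ν := by
    rw [← sq, ← integral_mul_self_eq_lpNorm_two_sq memLp_df.1,
      ← neg_eq_iff_eq_neg.2 (integral_mul_partialDeriv_eq_neg hab hf₁ hdf hf₀)]
    exact (neg_le_abs _).trans (abs_integral_mul_le_lpNorm_two_mul_lpNorm_two memLp_f memLp_ddf)
  have deriv_le : lpNorm (∂[i] f) 2 ν ≤ (b i - a i) * lpNorm (∂[i] (∂[i] f)) 2 ν := by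
    refine le_of_mul_self_le_mul (mul_nonneg side_nonneg lpNorm_nonneg)
      (interpolation.trans ((mul_le_mul_of_nonneg_right poincare lpNorm_nonneg).trans_eq ?_))
    ring
  calc lpNorm f 2 ν
      ≤ (b i - a i) * lpNorm (∂[i] f) 2 ν := poincare
    _ ≤ (b i - a i) * ((b i - a i) * lpNorm (∂[i] (∂[i] f)) 2 ν) := by gcongr
    _ = (b i - a i) ^ 2 * lpNorm (∂[i] (∂[i] f)) 2 ν := by ring

lemma abs_integral_partialDeriv_mul_partialDeriv_le (hab : a ≤ b)
    (hf : ∀ x ∈ Icc a b, ContDiffAt ℝ 2 f x) (hg : ∀ x ∈ Icc a b, ContDiffAt ℝ 2 g x)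
    (hg₀ : VanishesOnFaces i a b g) :
    |∫ x in Icc a b, ∂[i] f x * ∂[i] g x| ≤
      (b i - a i) ^ 2 * lpNorm (∂[i] (∂[i] f)) 2 (volume.restrict (Icc a b)) *
        lpNorm (∂[i] (∂[i] g)) 2 (volume.restrict (Icc a b)) := by
  set ν := volume.restrict (Icc a b)
  have hdf : ∀ x ∈ Icc a b, ContDiffAt ℝ 1 (∂[i] f) x :=
    fun x hx ↦ contDiffAt_partialDeriv i (hf x hx) (by norm_num)
  have memLp_g : MemLp g 2 ν :=
    memLp_restrict_of_continuousOn isCompact_Icc (continuousOn_of_forall_contDiffAt hg) 2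
  have memLp_ddf : MemLp (∂[i] (∂[i] f)) 2 ν :=
    memLp_restrict_of_continuousOn isCompact_Icc (continuousOn_partialDeriv hdf) 2
  have by_parts := integral_mul_partialDeriv_eq_neg hab
    (fun x hx ↦ (hg x hx).of_le (by norm_num)) hdf hg₀
  calc |∫ x in Icc a b, ∂[i] f x * ∂[i] g x|
      = |∫ x in Icc a b, ∂[i] (∂[i] f) x * g x| := by
        simp_rw [mul_comm (∂[i] f _), mul_comm _ (g _)]
        rw [by_parts, abs_neg]
    _ ≤ lpNorm (∂[i] (∂[i] f)) 2 ν * lpNorm g 2 ν :=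
        abs_integral_mul_le_lpNorm_two_mul_lpNorm_two memLp_ddf memLp_g
    _ ≤ lpNorm (∂[i] (∂[i] f)) 2 ν * ((b i - a i) ^ 2 * lpNorm (∂[i] (∂[i] g)) 2 ν) := by
        gcongr
        · exact lpNorm_nonneg
        · exact lpNorm_le_sq_mul_lpNorm_partialDeriv_partialDeriv hab hg hg₀
    _ = (b i - a i) ^ 2 * lpNorm (∂[i] (∂[i] f)) 2 ν * lpNorm (∂[i] (∂[i] g)) 2 ν := by ring

end BoxIntegrals

section Laplacian

variable {d : ℕ} {f : (Fin d → ℝ) → ℝ} {x : Fin d → ℝ}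

/-- The Laplacian as the sum of the unmixed second partial derivatives; the space `Fin d → ℝ` is not
an inner product space, so that Mathlib's `Laplacian.laplacian` does not apply to it. -/
noncomputable def coordLaplacian (f : (Fin d → ℝ) → ℝ) : (Fin d → ℝ) → ℝ :=
  fun x ↦ ∑ j, ∂[j] (∂[j] f) x

lemma contDiffAt_partialDeriv_partialDeriv (hf : ContDiffAt ℝ 4 f x) (j : Fin d) :
    ContDiffAt ℝ 2 (∂[j] (∂[j] f)) x :=
  contDiffAt_partialDeriv (n := 3) j (contDiffAt_partialDeriv j hf (by norm_num)) (by norm_num)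

lemma contDiffAt_coordLaplacian (hf : ContDiffAt ℝ 4 f x) : ContDiffAt ℝ 2 (coordLaplacian f) x :=
  ContDiffAt.sum fun j _ ↦ contDiffAt_partialDeriv_partialDeriv hf j

lemma lpNorm_partialDeriv_coordLaplacian_le {K : Set (Fin d → ℝ)} (hK : IsCompact K)
    (hf : ∀ x ∈ K, ContDiffAt ℝ 4 f x) (i : Fin d) :
    lpNorm (∂[i] (∂[i] (coordLaplacian f))) 2 (volume.restrict K) ≤
      ∑ j, lpNorm (∂[i] (∂[i] (∂[j] (∂[j] f)))) 2 (volume.restrict K) := by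
  have smooth (j : Fin d) : ∀ x ∈ K, ContDiffAt ℝ 2 (∂[j] (∂[j] f)) x :=
    fun x hx ↦ contDiffAt_partialDeriv_partialDeriv (hf x hx) j
  have commute : ∂[i] (∂[i] (coordLaplacian f)) =ᵐ[volume.restrict K]
      ∑ j, ∂[i] (∂[i] (∂[j] (∂[j] f))) :=
    ae_restrict_of_forall_mem hK.measurableSet fun x hx ↦
      (partialDeriv_partialDeriv_sum i fun j _ ↦ smooth j x hx).trans (by simp)
  rw [lpNorm_congr_ae commute]
  refine lpNorm_sum_le (fun j _ ↦ memLp_restrict_of_continuousOn hK ?_ 2) one_le_two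
  exact continuousOn_partialDeriv fun x hx ↦
    contDiffAt_partialDeriv i (smooth j x hx) (by norm_num)

end Laplacian

section IteratedIntegrals

lemma setIntegral_Icc_eq_intervalIntegral {n : ℕ} {a b : Fin (n + 1) → ℝ} (hab : a ≤ b)
    {F : (Fin (n + 1) → ℝ) → ℝ} (hF : IntegrableOn F (Icc a b)) :
    ∫ x in Icc a b, F x =
      ∫ t in a 0..b 0, ∫ y in Icc (Fin.tail a) (Fin.tail b), F (Fin.cons t y) := by
  let e := (MeasurableEquiv.piFinSuccAbove (fun _ : Fin (n + 1) ↦ ℝ) 0).symm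
  have he : MeasurePreserving e :=
    (volume_preserving_piFinSuccAbove (fun _ : Fin (n + 1) ↦ ℝ) 0).symm
  have e_apply (q : ℝ × (Fin n → ℝ)) : e q = Fin.cons q.1 q.2 := by
    simp [e, MeasurableEquiv.piFinSuccAbove, Fin.insertNthEquiv]
  have preimage_box : e ⁻¹' Icc a b = Icc (a 0) (b 0) ×ˢ Icc (Fin.tail a) (Fin.tail b) := by
    ext ⟨t, y⟩
    simp only [mem_preimage, e_apply, mem_prod, mem_Icc, Pi.le_def, Fin.forall_fin_succ,
      Fin.cons_zero, Fin.cons_succ, Fin.tail]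
    tauto
  rw [← he.setIntegral_preimage_emb e.measurableEmbedding, preimage_box,
    Measure.volume_eq_prod, setIntegral_prod, intervalIntegral.integral_of_le (hab 0),
    integral_Icc_eq_integral_Ioc]
  · simp only [e_apply]
  · rw [← preimage_box, ← Measure.volume_eq_prod]
    exact (he.integrableOn_comp_preimage e.measurableEmbedding).2 hF

lemma continuousOn_comp_cons {n : ℕ} {a b : Fin (n + 1) → ℝ} {F : (Fin (n + 1) → ℝ) → ℝ}
    (hF : ContinuousOn F (Icc a b)) {t : ℝ} (ht : t ∈ Icc (a 0) (b 0)) :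
    ContinuousOn (fun y ↦ F (Fin.cons t y)) (Icc (Fin.tail a) (Fin.tail b)) := by
  refine hF.comp (by fun_prop) fun y hy ↦ ?_
  exact ⟨Fin.cases ht.1 hy.1, Fin.cases ht.2 hy.2⟩

lemma setIntegral_Icc_fin_three {a b : Fin 3 → ℝ} (hab : a ≤ b) {F : (Fin 3 → ℝ) → ℝ}
    (hF : ContinuousOn F (Icc a b)) :
    ∫ p in Icc a b, F p =
      ∫ x in a 0..b 0, ∫ y in a 1..b 1, ∫ z in a 2..b 2, F ![x, y, z] := by
  have integrableOn {n : ℕ} {a b : Fin n → ℝ} {G : (Fin n → ℝ) → ℝ}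
      (hG : ContinuousOn G (Icc a b)) : IntegrableOn G (Icc a b) :=
    hG.integrableOn_compact isCompact_Icc
  rw [setIntegral_Icc_eq_intervalIntegral hab (integrableOn hF)]
  refine intervalIntegral.integral_congr fun x hx ↦ ?_
  rw [uIcc_of_le (hab 0)] at hx
  have hFx := continuousOn_comp_cons hF hx
  refine (setIntegral_Icc_eq_intervalIntegral (fun i ↦ hab i.succ) (integrableOn hFx)).trans ?_
  refine intervalIntegral.integral_congr fun y hy ↦ ?_
  have hFxy := continuousOn_comp_cons hFx (uIcc_of_le (hab 1) ▸ hy)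
  refine (setIntegral_Icc_eq_intervalIntegral (fun i ↦ hab i.succ.succ)
    (integrableOn hFxy)).trans ?_
  refine intervalIntegral.integral_congr fun z _ ↦ ?_
  have cons_eq (v : Fin 0 → ℝ) :
      F (Fin.cons x (Fin.cons y (Fin.cons z v))) = F ![x, y, z] := by
    congr 1
    ext k
    fin_cases k <;> rfl
  simp [cons_eq, Measure.real, Real.volume_Icc_pi]

end IteratedIntegrals

section ThreeVariables

/-- A curried function of three real variables, as a function on `Fin 3 → ℝ`. -/
def uncurry3 (f : ℝ → ℝ → ℝ → ℝ) : (Fin 3 → ℝ) → ℝ :=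
  fun p ↦ f (p 0) (p 1) (p 2)

lemma uncurry3_qd1 (f : ℝ → ℝ → ℝ → ℝ) : uncurry3 (qd1 f) = ∂[0] (uncurry3 f) := by
  ext p
  simp [uncurry3, qd1, partialDeriv_eq_deriv_update]

lemma uncurry3_qd2 (f : ℝ → ℝ → ℝ → ℝ) : uncurry3 (qd2 f) = ∂[1] (uncurry3 f) := by
  ext p
  simp [uncurry3, qd2, partialDeriv_eq_deriv_update]

lemma uncurry3_qd3 (f : ℝ → ℝ → ℝ → ℝ) : uncurry3 (qd3 f) = ∂[2] (uncurry3 f) := by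
  ext p
  simp [uncurry3, qd3, partialDeriv_eq_deriv_update]

variable {a1 b1 a2 b2 a3 b3 : ℝ} {f g u : ℝ → ℝ → ℝ → ℝ}

lemma iterated_integral_eq_setIntegral (h1 : a1 ≤ b1) (h2 : a2 ≤ b2) (h3 : a3 ≤ b3)
    (hf : ContinuousOn (fun p : Fin 3 → ℝ ↦ f (p 0) (p 1) (p 2))
      (Icc ![a1, a2, a3] ![b1, b2, b3])) :
    ∫ x in a1..b1, ∫ y in a2..b2, ∫ z in a3..b3, f x y z =
      ∫ p in Icc ![a1, a2, a3] ![b1, b2, b3], f (p 0) (p 1) (p 2) := by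
  refine (setIntegral_Icc_fin_three ?_ hf).symm
  simp [Pi.le_def, Fin.forall_fin_succ, h1, h2, h3]

lemma contDiffAt_uncurry3 (hu : C4Near3 u a1 b1 a2 b2 a3 b3) :
    ∀ p ∈ Icc ![a1, a2, a3] ![b1, b2, b3], ContDiffAt ℝ 4 (uncurry3 u) p := by
  obtain ⟨U, hU, box_subset, hu⟩ := hu
  intro p hp
  have mem_U : (p 0, p 1, p 2) ∈ U := box_subset
    ⟨⟨hp.1 0, hp.2 0⟩, ⟨hp.1 1, hp.2 1⟩, ⟨hp.1 2, hp.2 2⟩⟩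
  exact (hu.contDiffAt (hU.mem_nhds mem_U)).comp (f := fun p : Fin 3 → ℝ ↦ (p 0, p 1, p 2)) p
    (by fun_prop)

lemma qd1_apply (f : ℝ → ℝ → ℝ → ℝ) (p : Fin 3 → ℝ) :
    qd1 f (p 0) (p 1) (p 2) = ∂[0] (uncurry3 f) p :=
  congrFun (uncurry3_qd1 f) p

lemma qd2_apply (f : ℝ → ℝ → ℝ → ℝ) (p : Fin 3 → ℝ) :
    qd2 f (p 0) (p 1) (p 2) = ∂[1] (uncurry3 f) p :=
  congrFun (uncurry3_qd2 f) p

lemma qd3_apply (f : ℝ → ℝ → ℝ → ℝ) (p : Fin 3 → ℝ) :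
    qd3 f (p 0) (p 1) (p 2) = ∂[2] (uncurry3 f) p :=
  congrFun (uncurry3_qd3 f) p

lemma lpNorm_two_le_sqrt_iterated_integral (h1 : a1 ≤ b1) (h2 : a2 ≤ b2) (h3 : a3 ≤ b3)
    {g : (Fin 3 → ℝ) → ℝ} (hg : ContinuousOn g (Icc ![a1, a2, a3] ![b1, b2, b3]))
    (hf : ContinuousOn (fun p : Fin 3 → ℝ ↦ f (p 0) (p 1) (p 2))
      (Icc ![a1, a2, a3] ![b1, b2, b3]))
    (hgf : ∀ p ∈ Icc ![a1, a2, a3] ![b1, b2, b3], g p ^ 2 ≤ f (p 0) (p 1) (p 2)) :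
    lpNorm g 2 (volume.restrict (Icc ![a1, a2, a3] ![b1, b2, b3])) ≤
      √(∫ x in a1..b1, ∫ y in a2..b2, ∫ z in a3..b3, f x y z) := by
  rw [lpNorm_two_eq_sqrt_integral_sq (hg.aestronglyMeasurable measurableSet_Icc),
    iterated_integral_eq_setIntegral h1 h2 h3 hf]
  exact Real.sqrt_le_sqrt (setIntegral_mono_on ((hg.pow 2).integrableOn_compact isCompact_Icc)
    (hf.integrableOn_compact isCompact_Icc) measurableSet_Icc hgf)

lemma lpNorm_partialDeriv_le_semiH2Box (h1 : a1 ≤ b1) (h2 : a2 ≤ b2) (h3 : a3 ≤ b3)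
    (hf : ∀ p ∈ Icc ![a1, a2, a3] ![b1, b2, b3], ContDiffAt ℝ 2 (uncurry3 f) p) (i : Fin 3) :
    lpNorm (∂[i] (∂[i] (uncurry3 f))) 2 (volume.restrict (Icc ![a1, a2, a3] ![b1, b2, b3])) ≤
      semiH2Box f a1 b1 a2 b2 a3 b3 := by
  have cont (k l : Fin 3) :
      ContinuousOn (∂[k] (∂[l] (uncurry3 f))) (Icc ![a1, a2, a3] ![b1, b2, b3]) :=
    continuousOn_partialDeriv fun p hp ↦ contDiffAt_partialDeriv l (hf p hp) (by norm_num)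
  refine lpNorm_two_le_sqrt_iterated_integral h1 h2 h3 (cont i i) ?_ fun p _ ↦ ?_ <;>
    simp only [qd1_apply, qd2_apply, qd3_apply, uncurry3_qd1, uncurry3_qd2, uncurry3_qd3]
  · fun_prop
  · refine sub_nonneg.1 ?_
    fin_cases i <;> simp only [Fin.zero_eta, Fin.mk_one, Fin.reduceFinMk] <;> ring_nf <;>
      positivity

lemma lpNorm_partialDeriv_le_semiH4Box (h1 : a1 ≤ b1) (h2 : a2 ≤ b2) (h3 : a3 ≤ b3)
    (hf : ∀ p ∈ Icc ![a1, a2, a3] ![b1, b2, b3], ContDiffAt ℝ 4 (uncurry3 f) p) (i j : Fin 3) :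
    lpNorm (∂[i] (∂[i] (∂[j] (∂[j] (uncurry3 f))))) 2
      (volume.restrict (Icc ![a1, a2, a3] ![b1, b2, b3])) ≤ semiH4Box f a1 b1 a2 b2 a3 b3 := by
  have cont (k l m n : Fin 3) : ContinuousOn (∂[k] (∂[l] (∂[m] (∂[n] (uncurry3 f)))))
      (Icc ![a1, a2, a3] ![b1, b2, b3]) :=
    continuousOn_partialDeriv fun p hp ↦ contDiffAt_partialDeriv (n := 2) l
      (contDiffAt_partialDeriv (n := 3) m
        (contDiffAt_partialDeriv n (hf p hp) (by norm_num)) (by norm_num)) (by norm_num)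
  refine lpNorm_two_le_sqrt_iterated_integral h1 h2 h3 (cont i i j j) ?_ fun p hp ↦ ?_ <;>
    simp only [qd1_apply, qd2_apply, qd3_apply, uncurry3_qd1, uncurry3_qd2, uncurry3_qd3]
  · fun_prop
  · have comm (k l : Fin 3) := partialDeriv_sq_comm k l (hf p hp)
    refine sub_nonneg.1 ?_
    fin_cases i <;> fin_cases j <;>
      simp only [Fin.zero_eta, Fin.mk_one, Fin.reduceFinMk, comm 1 0, comm 2 0, comm 2 1] <;>
      ring_nf <;> positivity

lemma uncurry3_sum_qd_qd (u : ℝ → ℝ → ℝ → ℝ) :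
    uncurry3 (fun x y z ↦ qd1 (qd1 u) x y z + qd2 (qd2 u) x y z + qd3 (qd3 u) x y z) =
      coordLaplacian (uncurry3 u) := by
  ext p
  simp only [uncurry3, coordLaplacian, Fin.sum_univ_three, ← uncurry3_qd1, ← uncurry3_qd2,
    ← uncurry3_qd3]

lemma iterated_integral_qd_mul_qd (h1 : a1 ≤ b1) (h2 : a2 ≤ b2) (h3 : a3 ≤ b3)
    (hf : ∀ p ∈ Icc ![a1, a2, a3] ![b1, b2, b3], ContDiffAt ℝ 1 (uncurry3 f) p)
    (hg : ∀ p ∈ Icc ![a1, a2, a3] ![b1, b2, b3], ContDiffAt ℝ 1 (uncurry3 g) p) :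
    ∫ x in a1..b1, ∫ y in a2..b2, ∫ z in a3..b3, qd1 f x y z * qd1 g x y z
        + qd2 f x y z * qd2 g x y z + qd3 f x y z * qd3 g x y z =
      ∑ i, ∫ p in Icc ![a1, a2, a3] ![b1, b2, b3],
        ∂[i] (uncurry3 f) p * ∂[i] (uncurry3 g) p := by
  have cont (i : Fin 3) : ContinuousOn (fun p ↦ ∂[i] (uncurry3 f) p * ∂[i] (uncurry3 g) p)
      (Icc ![a1, a2, a3] ![b1, b2, b3]) :=
    (continuousOn_partialDeriv hf).mul (continuousOn_partialDeriv hg)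
  rw [← integral_finsetSum _ fun i _ ↦ (cont i).integrableOn_compact isCompact_Icc,
    iterated_integral_eq_setIntegral h1 h2 h3] <;>
    simp only [qd1_apply, qd2_apply, qd3_apply, Fin.sum_univ_three]
  exact ((cont 0).add (cont 1)).add (cont 2)

lemma lpNorm_partialDeriv_coordLaplacian_le_semiH4Box (h1 : a1 ≤ b1) (h2 : a2 ≤ b2) (h3 : a3 ≤ b3)
    (hu : ∀ p ∈ Icc ![a1, a2, a3] ![b1, b2, b3], ContDiffAt ℝ 4 (uncurry3 u) p) (i : Fin 3) :
    lpNorm (∂[i] (∂[i] (coordLaplacian (uncurry3 u)))) 2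
      (volume.restrict (Icc ![a1, a2, a3] ![b1, b2, b3])) ≤
      3 * semiH4Box u a1 b1 a2 b2 a3 b3 := by
  refine (lpNorm_partialDeriv_coordLaplacian_le isCompact_Icc hu i).trans ?_
  simpa using Finset.sum_le_card_nsmul Finset.univ _ _
    fun j _ ↦ lpNorm_partialDeriv_le_semiH4Box h1 h2 h3 hu i j

end ThreeVariables

section CubicMorleyElement

/-- The cubic polynomials in one variable vanishing at `c - h` and `c + h`: they make up the
interpolation error of the cubic Morley element. -/
def cubicBubble (α β c h t : ℝ) : ℝ :=
  (α + β * (t - c)) * ((t - c) ^ 2 - h ^ 2)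

variable {u w : ℝ → ℝ → ℝ → ℝ}

lemma sub_IK3_eq_sum_cubicBubble (hw : MorleyShape3 w) (c1 c2 c3 : ℝ) {h : ℝ} (hh : h ≠ 0) :
    ∃ α β : Fin 3 → ℝ, uncurry3 (fun x y z ↦ w x y z - IK3 w c1 c2 c3 h x y z) =
      fun p ↦ ∑ i, cubicBubble (α i) (β i) (![c1, c2, c3] i) h (p i) := by
  obtain ⟨k0, k1, k2, k3, k4, k5, k6, k7, k8, k9, k10, k11, k12, k13, hw⟩ := hw
  refine ⟨![k4 + 3 * k10 * c1, k5 + 3 * k11 * c2, k6 + 3 * k12 * c3], ![k10, k11, k12], ?_⟩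
  ext p
  simp only [uncurry3, IK3, hw, cubicBubble, Fin.sum_univ_three, Matrix.cons_val]
  field_simp
  ring

lemma isAffineInCoord_uncurry3_IK3 (w : ℝ → ℝ → ℝ → ℝ) (c1 c2 c3 h : ℝ) (i : Fin 3) :
    IsAffineInCoord i (uncurry3 (IK3 w c1 c2 c3 h)) := by
  intro x t
  fin_cases i <;> simp [uncurry3, IK3] <;> ring

lemma contDiff_uncurry3_of_morleyShape3 (hw : MorleyShape3 w) {n : WithTop ℕ∞} :
    ContDiff ℝ n (uncurry3 w) := by
  obtain ⟨k0, k1, k2, k3, k4, k5, k6, k7, k8, k9, k10, k11, k12, k13, hw⟩ := hw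
  unfold uncurry3
  simp only [hw]
  fun_prop

lemma contDiff_uncurry3_IK3 (w : ℝ → ℝ → ℝ → ℝ) (c1 c2 c3 h : ℝ) {n : WithTop ℕ∞} :
    ContDiff ℝ n (uncurry3 (IK3 w c1 c2 c3 h)) := by
  unfold uncurry3 IK3
  fun_prop

lemma partialDeriv_partialDeriv_sub_IK3 (hw : MorleyShape3 w) (c1 c2 c3 h : ℝ) (i : Fin 3) :
    ∂[i] (∂[i] (uncurry3 fun x y z ↦ w x y z - IK3 w c1 c2 c3 h x y z)) =
      ∂[i] (∂[i] (uncurry3 w)) :=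
  partialDeriv_partialDeriv_sub_of_isAffineInCoord
    ((contDiff_uncurry3_of_morleyShape3 hw).differentiable one_ne_zero)
    ((contDiff_uncurry3_IK3 w c1 c2 c3 h).differentiable one_ne_zero)
    (isAffineInCoord_uncurry3_IK3 w c1 c2 c3 h i)

lemma abs_integral_partialDeriv_mul_partialDeriv_sub_IK3_le {c1 c2 c3 h : ℝ} (hh : 0 < h)
    (hw : MorleyShape3 w) {L : (Fin 3 → ℝ) → ℝ} (i : Fin 3)
    (hL : ∀ p ∈ Icc ![c1 - h, c2 - h, c3 - h] ![c1 + h, c2 + h, c3 + h], ContDiffAt ℝ 2 L p) :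
    |∫ p in Icc ![c1 - h, c2 - h, c3 - h] ![c1 + h, c2 + h, c3 + h],
        ∂[i] L p * ∂[i] (uncurry3 fun x y z ↦ w x y z - IK3 w c1 c2 c3 h x y z) p| ≤
      (2 * h) ^ 2 *
        lpNorm (∂[i] (∂[i] L)) 2
          (volume.restrict (Icc ![c1 - h, c2 - h, c3 - h] ![c1 + h, c2 + h, c3 + h])) *
        lpNorm (∂[i] (∂[i] (uncurry3 w))) 2
          (volume.restrict (Icc ![c1 - h, c2 - h, c3 - h] ![c1 + h, c2 + h, c3 + h])) := by
  have lower_apply : ![c1 - h, c2 - h, c3 - h] i = ![c1, c2, c3] i - h := by fin_cases i <;> rfl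
  have upper_apply : ![c1 + h, c2 + h, c3 + h] i = ![c1, c2, c3] i + h := by fin_cases i <;> rfl
  have lower_le_upper : ![c1 - h, c2 - h, c3 - h] ≤ ![c1 + h, c2 + h, c3 + h] := by
    simp [Pi.le_def, Fin.forall_fin_succ, hh.le, sub_eq_add_neg]
  obtain ⟨α, β, error_eq⟩ := sub_IK3_eq_sum_cubicBubble hw c1 c2 c3 hh.ne'
  have bubble_vanishes : VanishesOnFaces i ![c1 - h, c2 - h, c3 - h] ![c1 + h, c2 + h, c3 + h]
      (fun p ↦ cubicBubble (α i) (β i) (![c1, c2, c3] i) h (p i)) := by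
    rintro p - (hp | hp) <;> simp [cubicBubble, hp, lower_apply, upper_apply]
  have bubble_smooth : ContDiff ℝ 2
      (fun p : Fin 3 → ℝ ↦ cubicBubble (α i) (β i) (![c1, c2, c3] i) h (p i)) := by
    unfold cubicBubble
    fun_prop
  have error_deriv := error_eq ▸ partialDeriv_sum_comp_apply i
    fun j ↦ cubicBubble (α j) (β j) (![c1, c2, c3] j) h
  rw [← partialDeriv_partialDeriv_sub_IK3 hw c1 c2 c3 h i, error_deriv]
  refine (abs_integral_partialDeriv_mul_partialDeriv_le lower_le_upper hL
    (fun p _ ↦ bubble_smooth.contDiffAt) bubble_vanishes).trans_eq ?_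
  rw [lower_apply, upper_apply]
  ring

lemma abs_integral_partialDeriv_coordLaplacian_mul_le {c1 c2 c3 h : ℝ} (hh : 0 < h)
    (hu : C4Near3 u (c1 - h) (c1 + h) (c2 - h) (c2 + h) (c3 - h) (c3 + h))
    (hw : MorleyShape3 w) (i : Fin 3) :
    |∫ p in Icc ![c1 - h, c2 - h, c3 - h] ![c1 + h, c2 + h, c3 + h],
        ∂[i] (coordLaplacian (uncurry3 u)) p *
          ∂[i] (uncurry3 fun x y z ↦ w x y z - IK3 w c1 c2 c3 h x y z) p| ≤
      12 * h ^ 2 * semiH4Box u (c1 - h) (c1 + h) (c2 - h) (c2 + h) (c3 - h) (c3 + h) *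
        semiH2Box w (c1 - h) (c1 + h) (c2 - h) (c2 + h) (c3 - h) (c3 + h) := by
  have side (c : ℝ) : c - h ≤ c + h := by linarith
  have smooth_u := contDiffAt_uncurry3 hu
  calc _ ≤ (2 * h) ^ 2 * _ * _ := abs_integral_partialDeriv_mul_partialDeriv_sub_IK3_le hh hw i
        fun p hp ↦ contDiffAt_coordLaplacian (smooth_u p hp)
    _ ≤ (2 * h) ^ 2 *
          (3 * semiH4Box u (c1 - h) (c1 + h) (c2 - h) (c2 + h) (c3 - h) (c3 + h)) *
          semiH2Box w (c1 - h) (c1 + h) (c2 - h) (c2 + h) (c3 - h) (c3 + h) := by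
        gcongr
        · exact lpNorm_nonneg
        · exact mul_nonneg (sq_nonneg _) (mul_nonneg zero_le_three (Real.sqrt_nonneg _))
        · exact lpNorm_partialDeriv_coordLaplacian_le_semiH4Box
            (side c1) (side c2) (side c3) smooth_u i
        · exact lpNorm_partialDeriv_le_semiH2Box (side c1) (side c2) (side c3)
            (fun p _ ↦ (contDiff_uncurry3_of_morleyShape3 hw).contDiffAt) i
    _ = _ := by ring

end CubicMorleyElement

/-- Superconvergence of the volume term of the consistency error on one cubic element. -/
theorem stmt_14 :
    ∃ C > (0:ℝ), ∀ h : ℝ, 0 < h → ∀ c1 c2 c3 : ℝ, ∀ u w : ℝ → ℝ → ℝ → ℝ,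
      C4Near3 u (c1 - h) (c1 + h) (c2 - h) (c2 + h) (c3 - h) (c3 + h) → MorleyShape3 w →
      |∫ x in (c1 - h)..(c1 + h), ∫ y in (c2 - h)..(c2 + h), ∫ z in (c3 - h)..(c3 + h),
          qd1 (fun a b c => qd1 (qd1 u) a b c + qd2 (qd2 u) a b c + qd3 (qd3 u) a b c)
              x y z
              * qd1 (fun a b c => w a b c - IK3 w c1 c2 c3 h a b c) x y z
            + qd2 (fun a b c => qd1 (qd1 u) a b c + qd2 (qd2 u) a b c + qd3 (qd3 u) a b c)
              x y z
              * qd2 (fun a b c => w a b c - IK3 w c1 c2 c3 h a b c) x y z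
            + qd3 (fun a b c => qd1 (qd1 u) a b c + qd2 (qd2 u) a b c + qd3 (qd3 u) a b c)
              x y z
              * qd3 (fun a b c => w a b c - IK3 w c1 c2 c3 h a b c) x y z|
        ≤ C * h ^ 2 * semiH4Box u (c1 - h) (c1 + h) (c2 - h) (c2 + h) (c3 - h) (c3 + h) * semiH2Box w (c1 - h) (c1 + h) (c2 - h) (c2 + h) (c3 - h) (c3 + h) := by
  refine ⟨36, by norm_num, fun h hh c1 c2 c3 u w hu hw ↦ ?_⟩
  have side (c : ℝ) : c - h ≤ c + h := by linarith
  rw [iterated_integral_qd_mul_qd (side c1) (side c2) (side c3)]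
  · rw [uncurry3_sum_qd_qd]
    calc _ ≤ _ := Finset.abs_sum_le_sum_abs _ _
      _ ≤ _ := Finset.sum_le_card_nsmul _ _ _
        fun i _ ↦ abs_integral_partialDeriv_coordLaplacian_mul_le hh hu hw i
      _ = _ := by simp only [Finset.card_univ, Fintype.card_fin, nsmul_eq_mul]; ring
  · rw [uncurry3_sum_qd_qd]
    exact fun p hp ↦ (contDiffAt_coordLaplacian (contDiffAt_uncurry3 hu p hp)).of_le (by norm_num)
  · exact fun p _ ↦ ((contDiff_uncurry3_of_morleyShape3 hw).sub
      (contDiff_uncurry3_IK3 w c1 c2 c3 h)).contDiffAt
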